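/- arXiv:1604.04719 — 3 statements merged into one kernel-verified Lean document; each statement's English description precedes it below -/
import Mathlib

section
/- Let n > n₁ ≥ 2 and m > m₁ ≥ 2 be integers with F_n - F_{n₁} = T_m - T_{m₁}. Then |((α^{n-n₁} - 1)/(√5·c_α))·α^{n₁}·α_T^{-m} - 1| < 1.42·α_T^{m₁-m}, where α = (1+√5)/2, α_T is the unique real root of x³ - x² - x - 1, and c_α = 1/(-α_T² + 4α_T - 1). -/
/-- The Tribonacci sequence: T 0 = 0, T 1 = T 2 = 1,
    T (k+3) = T (k+2) + T (k+1) + T k. -/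
def trib : ℕ → ℤ
  | 0 => 0
  | 1 => 1
  | 2 => 1
  | n + 3 => trib (n + 2) + trib (n + 1) + trib n

/-!
Write `e k = T k - c_α α_T ^ k` and `ψ = (1 - √5) / 2`. Binet's formula turns the hypothesis into
`(α ^ n - α ^ n₁) / √5 - c_α α_T ^ m = -T m₁ + e m + (ψ ^ n - ψ ^ n₁) / √5`, and the linear form
is the left-hand side divided by `c_α α_T ^ m`. The `ψ`-part is at most `|ψ| / √5 < 0.28`. The
error `e` satisfies a second-order recurrence whose characteristic roots `β`, `β̄` are the complex
roots of `x³ - x² - x - 1`. Hence `|e (k + 1) - β e k|²`, a positive definite quadratic form in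
`(e k, e (k + 1))`, is multiplied by `|β|² < 1` at each step, which yields `|e m| < 0.3`. Finally
`T k + 0.58 < 1.42 c_α α_T ^ k` for `k ≥ 2`, by induction.
-/

section SecondOrderRecurrence

variable {R : Type*} [CommRing R]

/-- The quadratic form `y² + p x y + q x²`, equal to `(y - β x) (y - γ x)` for `β`, `γ` the roots of
`t² + p t + q`. Along a solution of `u (k + 2) + p u (k + 1) + q u k = 0` it is evaluated at
`x = u k`, `y = u (k + 1)`. -/
def recurrenceForm (p q x y : R) : R := y ^ 2 + p * x * y + q * x ^ 2

theorem recurrenceForm_eq_pow_mul {p q : R} {u : ℕ → R}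
    (hu : ∀ k, u (k + 2) + p * u (k + 1) + q * u k = 0) (k : ℕ) :
    recurrenceForm p q (u k) (u (k + 1)) = q ^ k * recurrenceForm p q (u 0) (u 1) := by
  induction k with
  | zero => simp
  | succ k ih =>
    rw [pow_succ', mul_assoc, ← ih]
    simp only [recurrenceForm]
    linear_combination (u (k + 2) - q * u k) * hu k

variable [LinearOrder R] [IsStrictOrderedRing R]

theorem neg_discrim_mul_sq_le_recurrenceForm (p q x y : R) :
    (4 * q - p ^ 2) * x ^ 2 ≤ 4 * recurrenceForm p q x y := by
  have complete_square :
      4 * recurrenceForm p q x y = (2 * y + p * x) ^ 2 + (4 * q - p ^ 2) * x ^ 2 := by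
    simp only [recurrenceForm]
    ring
  rw [complete_square]
  exact le_add_of_nonneg_left (sq_nonneg _)

theorem neg_discrim_mul_sq_le_of_recurrence {p q : R} {u : ℕ → R}
    (hu : ∀ k, u (k + 2) + p * u (k + 1) + q * u k = 0) (k : ℕ) :
    (4 * q - p ^ 2) * u k ^ 2 ≤ 4 * (q ^ k * recurrenceForm p q (u 0) (u 1)) :=
  recurrenceForm_eq_pow_mul hu k ▸ neg_discrim_mul_sq_le_recurrenceForm p q (u k) (u (k + 1))

end SecondOrderRecurrence

theorem lt_mul_pow_of_trib_subrecurrence {R : Type*} [CommRing R] [LinearOrder R]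
    [IsStrictOrderedRing R] {a C : R} (ha : a ^ 3 = a ^ 2 + a + 1) {u : ℕ → R}
    (hu : ∀ k, u (k + 3) ≤ u (k + 2) + u (k + 1) + u k)
    (h₀ : u 0 < C) (h₁ : u 1 < C * a) (h₂ : u 2 < C * a ^ 2) : ∀ k, u k < C * a ^ k
  | 0 => by simpa using h₀
  | 1 => by simpa using h₁
  | 2 => h₂
  | k + 3 => by
    have ih₀ := lt_mul_pow_of_trib_subrecurrence ha hu h₀ h₁ h₂ k
    have ih₁ := lt_mul_pow_of_trib_subrecurrence ha hu h₀ h₁ h₂ (k + 1)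
    have ih₂ := lt_mul_pow_of_trib_subrecurrence ha hu h₀ h₁ h₂ (k + 2)
    calc u (k + 3) ≤ u (k + 2) + u (k + 1) + u k := hu k
      _ < C * a ^ (k + 2) + C * a ^ (k + 1) + C * a ^ k := by gcongr
      _ = C * a ^ (k + 3) := by linear_combination -C * a ^ k * ha

theorem trib_add_three (k : ℕ) : trib (k + 3) = trib (k + 2) + trib (k + 1) + trib k := by
  rw [trib]

theorem trib_nonneg : ∀ k, 0 ≤ trib k
  | 0 => le_rfl
  | 1 | 2 => zero_le_one
  | k + 3 => add_nonneg (add_nonneg (trib_nonneg (k + 2)) (trib_nonneg (k + 1))) (trib_nonneg k)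

-- The coefficients are those of the cofactor `x² + (a - 1) x + (a² - a - 1)` of `x - a`.
theorem trib_add_two_add_mul_eq_pow {R : Type*} [CommRing R] {a : R}
    (ha : a ^ 3 = a ^ 2 + a + 1) (k : ℕ) :
    (trib (k + 2) : R) + (a - 1) * trib (k + 1) + (a ^ 2 - a - 1) * trib k = a ^ (k + 1) := by
  induction k with
  | zero => simp [trib]
  | succ k ih =>
    rw [pow_succ a (k + 1), ← ih, trib_add_three]
    push_cast
    linear_combination -(trib k : R) * ha

section TribError

variable {K : Type*} [Field K]

/-- The coefficient `c_α` of `a ^ k` in the Binet formula for `T k`, where `a` is a root of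
`x³ - x² - x - 1`. It is the junk value `0` when `-a² + 4a - 1 = 0`. -/
def tribCoeff (a : K) : K := 1 / (-a ^ 2 + 4 * a - 1)

/-- The part `T k - c_α a ^ k` of the Binet formula for `T k` that comes from the roots of
`x³ - x² - x - 1` other than `a`. -/
def tribError (a : K) (k : ℕ) : K := trib k - tribCoeff a * a ^ k

theorem tribCoeff_mul_derivative {a : K} (ha : a ^ 3 = a ^ 2 + a + 1)
    (hden : -a ^ 2 + 4 * a - 1 ≠ 0) : tribCoeff a * (3 * a ^ 2 - 2 * a - 1) = a := by
  have inv_mul : tribCoeff a * (-a ^ 2 + 4 * a - 1) = 1 := one_div_mul_cancel hden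
  linear_combination a * inv_mul + tribCoeff a * ha

theorem tribError_recurrence {a : K} (ha : a ^ 3 = a ^ 2 + a + 1)
    (hden : -a ^ 2 + 4 * a - 1 ≠ 0) (k : ℕ) :
    tribError a (k + 2) + (a - 1) * tribError a (k + 1) + (a ^ 2 - a - 1) * tribError a k = 0 := by
  simp only [tribError]
  linear_combination trib_add_two_add_mul_eq_pow ha k - a ^ k * tribCoeff_mul_derivative ha hden

theorem recurrenceForm_tribError_zero_one {a : K} (ha : a ^ 3 = a ^ 2 + a + 1)
    (hden : -a ^ 2 + 4 * a - 1 ≠ 0) :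
    recurrenceForm (a - 1) (a ^ 2 - a - 1) (tribError a 0) (tribError a 1) =
      1 - (2 * a - 1) * tribCoeff a := by
  simp only [recurrenceForm, tribError, trib, Int.cast_zero, Int.cast_one]
  linear_combination tribCoeff a * tribCoeff_mul_derivative ha hden

theorem mul_tribError_sq_le [LinearOrder K] [IsStrictOrderedRing K] {a : K}
    (ha : a ^ 3 = a ^ 2 + a + 1) (hden : -a ^ 2 + 4 * a - 1 ≠ 0) (k : ℕ) :
    (3 * a ^ 2 - 2 * a - 5) * tribError a k ^ 2 ≤
      4 * ((a ^ 2 - a - 1) ^ k * (1 - (2 * a - 1) * tribCoeff a)) := by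
  rw [← recurrenceForm_tribError_zero_one ha hden]
  convert neg_discrim_mul_sq_le_of_recurrence (tribError_recurrence ha hden) k using 2
  ring

end TribError

section RealRoot

variable {a : ℝ}

theorem trib_root_bounds (ha : a ^ 3 = a ^ 2 + a + 1) : 1.839 < a ∧ a < 1.840 := by
  -- For a root `a`, the difference `a - t` times this cofactor is `t² + t + 1 - t³`.
  have cofactor_pos (t : ℝ) (ht : 5 / 3 < t) : 0 < a ^ 2 + (t - 1) * a + (t ^ 2 - t - 1) := by
    nlinarith [sq_nonneg (2 * a + (t - 1))]
  constructor
  · have hpos := cofactor_pos 1.839 (by norm_num)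
    refine sub_pos.mp (pos_of_mul_pos_left ?_ hpos.le)
    linarith
  · have hpos := cofactor_pos 1.840 (by norm_num)
    refine sub_pos.mp (pos_of_mul_pos_left ?_ hpos.le)
    linarith

theorem trib_root_denom_bounds (ha : a ^ 3 = a ^ 2 + a + 1) :
    2.974 < -a ^ 2 + 4 * a - 1 ∧ -a ^ 2 + 4 * a - 1 < 2.9744 := by
  obtain ⟨lower, upper⟩ := trib_root_bounds ha
  constructor <;> nlinarith

theorem lt_tribCoeff (ha : a ^ 3 = a ^ 2 + a + 1) : 0.3362 < tribCoeff a := by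
  obtain ⟨lower, upper⟩ := trib_root_denom_bounds ha
  rw [tribCoeff, lt_div_iff₀ (by linarith)]
  linarith

theorem abs_tribError_lt (ha : a ^ 3 = a ^ 2 + a + 1) {k : ℕ} (hk : 2 ≤ k) :
    |tribError a k| < 0.3 := by
  obtain ⟨lower, upper⟩ := trib_root_bounds ha
  have hden : -a ^ 2 + 4 * a - 1 ≠ 0 := by linarith [trib_root_denom_bounds ha]
  have sq_lower : 3.3819 < a ^ 2 := by nlinarith
  have sq_upper : a ^ 2 < 3.3857 := by nlinarith
  have ratio_pow_le : (a ^ 2 - a - 1) ^ k ≤ 0.3 :=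
    calc (a ^ 2 - a - 1) ^ k ≤ (a ^ 2 - a - 1) ^ 2 :=
          pow_le_pow_of_le_one (by linarith) (by linarith) hk
      _ ≤ 0.547 ^ 2 := by gcongr <;> linarith
      _ ≤ 0.3 := by norm_num
  have form_le : 1 - (2 * a - 1) * tribCoeff a ≤ 0.1 := by nlinarith [lt_tribCoeff ha]
  have form_pow_le : (a ^ 2 - a - 1) ^ k * (1 - (2 * a - 1) * tribCoeff a) ≤ 0.3 * 0.1 :=
    (mul_le_mul_of_nonneg_left form_le (pow_nonneg (by linarith) k)).trans
      (mul_le_mul_of_nonneg_right ratio_pow_le (by norm_num))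
  have scaled_sq_le : 1.4 * tribError a k ^ 2 ≤ 4 * (0.3 * 0.1) :=
    calc 1.4 * tribError a k ^ 2 ≤ (3 * a ^ 2 - 2 * a - 5) * tribError a k ^ 2 := by
          gcongr
          linarith
      _ ≤ 4 * ((a ^ 2 - a - 1) ^ k * (1 - (2 * a - 1) * tribCoeff a)) :=
          mul_tribError_sq_le ha hden k
      _ ≤ 4 * (0.3 * 0.1) := by gcongr
  exact abs_lt_of_sq_lt_sq (by linarith) (by norm_num)

theorem trib_add_lt_mul_pow (ha : a ^ 3 = a ^ 2 + a + 1) {k : ℕ} (hk : 2 ≤ k) :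
    (trib k : ℝ) + 0.58 < 1.42 * (tribCoeff a * a ^ k) := by
  obtain ⟨lower, -⟩ := trib_root_bounds ha
  obtain ⟨j, rfl⟩ := Nat.exists_eq_add_of_le' hk
  have bound_two : 1.61 < 1.42 * (tribCoeff a * a ^ 2) := by nlinarith [lt_tribCoeff ha]
  have bound_three : 1.61 * 1.839 < 1.42 * (tribCoeff a * a ^ 2) * a := by gcongr
  have bound_four : 1.61 * 1.839 ^ 2 < 1.42 * (tribCoeff a * a ^ 2) * a ^ 2 := by gcongr
  have shifted := lt_mul_pow_of_trib_subrecurrence ha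
    (u := fun i => (trib (i + 2) : ℝ) + 0.58)
    (fun i => by rw [trib_add_three (i + 2)]; push_cast; linarith)
    (lt_trans (by norm_num [trib]) bound_two)
    (lt_trans (by norm_num [trib]) bound_three)
    (lt_trans (by norm_num [trib]) bound_four) j
  calc (trib (j + 2) : ℝ) + 0.58 < 1.42 * (tribCoeff a * a ^ 2) * a ^ j := shifted
    _ = 1.42 * (tribCoeff a * a ^ (j + 2)) := by ring

end RealRoot

section BinetFib

open scoped goldenRatio

theorem goldenRatio_pow_div_sub_fib (n : ℕ) : φ ^ n / √5 - Nat.fib n = ψ ^ n / √5 := by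
  rw [Real.coe_fib_eq]
  ring

theorem abs_goldenConj_pow_sub_pow_le {m n : ℕ} (hm : 2 ≤ m) (hn : 3 ≤ n) :
    |ψ ^ n - ψ ^ m| ≤ |ψ| := by
  have abs_le_one : |ψ| ≤ 1 := abs_le.mpr
    ⟨Real.neg_one_lt_goldenConj.le, Real.goldenConj_neg.le.trans zero_le_one⟩
  calc |ψ ^ n - ψ ^ m| ≤ |ψ| ^ n + |ψ| ^ m := by
        simpa only [abs_pow] using abs_sub (ψ ^ n) (ψ ^ m)
    _ ≤ |ψ| ^ 3 + |ψ| ^ 2 := by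
        gcongr ?_ + ?_ <;> exact pow_le_pow_of_le_one (abs_nonneg ψ) abs_le_one ‹_›
    _ = |ψ| := by
        rw [abs_of_neg Real.goldenConj_neg]
        linear_combination (-ψ) * Real.goldenConj_sq

theorem abs_goldenConj_div_sqrt_five_lt : |ψ| / √5 < 0.28 := by
  have sqrt_lt : √5 < 2.25 := by rw [Real.sqrt_lt' (by norm_num)]; norm_num
  rw [abs_of_neg Real.goldenConj_neg, div_lt_iff₀ (by positivity), Real.goldenConj]
  linarith

theorem abs_goldenRatio_pow_sub_div_sub_fib_sub_lt {m n : ℕ} (hm : 2 ≤ m) (hn : 3 ≤ n) :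
    |(φ ^ n - φ ^ m) / √5 - (Nat.fib n - Nat.fib m)| < 0.28 :=
  calc |(φ ^ n - φ ^ m) / √5 - (Nat.fib n - Nat.fib m)| = |ψ ^ n - ψ ^ m| / √5 := by
        have conj_part : (φ ^ n - φ ^ m) / √5 - (Nat.fib n - Nat.fib m) = (ψ ^ n - ψ ^ m) / √5 := by
          linear_combination goldenRatio_pow_div_sub_fib n - goldenRatio_pow_div_sub_fib m
        rw [conj_part, abs_div, abs_of_nonneg (Real.sqrt_nonneg 5)]
    _ ≤ |ψ| / √5 :=
        div_le_div_of_nonneg_right (abs_goldenConj_pow_sub_pow_le hm hn) (Real.sqrt_nonneg 5)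
    _ < 0.28 := abs_goldenConj_div_sqrt_five_lt

theorem abs_goldenRatio_pow_sub_div_sub_coeff_mul_pow_lt {a : ℝ} (ha : a ^ 3 = a ^ 2 + a + 1)
    {n m n₁ m₁ : ℕ} (hn₁ : 2 ≤ n₁) (hn : 3 ≤ n) (hm₁ : 2 ≤ m₁) (hm : 2 ≤ m)
    (h : (Nat.fib n : ℤ) - Nat.fib n₁ = trib m - trib m₁) :
    |(φ ^ n - φ ^ n₁) / √5 - tribCoeff a * a ^ m| < 1.42 * (tribCoeff a * a ^ m₁) := by
  have fib_error := abs_lt.mp (abs_goldenRatio_pow_sub_div_sub_fib_sub_lt hn₁ hn)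
  have trib_error := abs_lt.mp (abs_tribError_lt ha hm)
  have trib_bound := trib_add_lt_mul_pow ha hm₁
  have trib_m₁_nonneg : (0 : ℝ) ≤ trib m₁ := by exact_mod_cast trib_nonneg m₁
  have h_real : (Nat.fib n : ℝ) - Nat.fib n₁ = trib m - trib m₁ := by exact_mod_cast h
  rw [tribError] at trib_error
  rw [abs_lt]
  constructor <;> linarith

end BinetFib

theorem mul_zpow_sub_one_eq_div {K : Type*} [Field K] {x y s c : K} (hy : y ≠ 0) (hc : c ≠ 0)
    {i n : ℕ} (hin : i ≤ n) (m : ℕ) :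
    (x ^ (n - i) - 1) / (s * c) * x ^ i * y ^ (-(m : ℤ)) - 1 =
      ((x ^ n - x ^ i) / s - c * y ^ m) / (c * y ^ m) := by
  rw [← pow_sub_mul_pow x hin, zpow_neg, zpow_natCast]
  field_simp

/-- If `n > n₁ ≥ 2`, `m > m₁ ≥ 2` and `F n - F n₁ = T m - T m₁`, then
`|((α^(n-n₁)-1)/(√5·c_α))·α^(n₁)·α_T^(-m) - 1| < 1.42·α_T^(m₁-m)`. -/
theorem fib_trib_linear_form_one (α αT cα : ℝ)
    (hα : α = (1 + Real.sqrt 5) / 2)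
    (hroot : αT ^ 3 - αT ^ 2 - αT - 1 = 0)
    (huniq : ∀ x : ℝ, x ^ 3 - x ^ 2 - x - 1 = 0 → x = αT)
    (hcα : cα = 1 / (-αT ^ 2 + 4 * αT - 1))
    (n m n₁ m₁ : ℕ) (hn₁ : 2 ≤ n₁) (hn : n₁ < n) (hm₁ : 2 ≤ m₁) (hm : m₁ < m)
    (h : (Nat.fib n : ℤ) - Nat.fib n₁ = trib m - trib m₁) :
    |((α ^ (n - n₁) - 1) / (Real.sqrt 5 * cα)) * α ^ n₁ * αT ^ (-(m : ℤ)) - 1| <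
      1.42 * αT ^ ((m₁ : ℤ) - m) := by
  obtain rfl : α = Real.goldenRatio := hα
  obtain rfl : cα = tribCoeff αT := hcα
  have ha : αT ^ 3 = αT ^ 2 + αT + 1 := by linarith
  have αT_pos : 0 < αT := by linarith [trib_root_bounds ha]
  have coeff_pos : 0 < tribCoeff αT := by linarith [lt_tribCoeff ha]
  have main_pos : 0 < tribCoeff αT * αT ^ m := by positivity
  rw [mul_zpow_sub_one_eq_div αT_pos.ne' coeff_pos.ne' hn.le, abs_div, abs_of_pos main_pos,
    div_lt_iff₀ main_pos]
  calc |(Real.goldenRatio ^ n - Real.goldenRatio ^ n₁) / √5 - tribCoeff αT * αT ^ m|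
      < 1.42 * (tribCoeff αT * αT ^ m₁) :=
        abs_goldenRatio_pow_sub_div_sub_coeff_mul_pow_lt ha hn₁ (hn₁.trans_lt hn) hm₁
          (hm₁.trans hm.le) h
    _ = 1.42 * αT ^ ((m₁ : ℤ) - m) * (tribCoeff αT * αT ^ m) := by
        rw [zpow_sub₀ αT_pos.ne', zpow_natCast, zpow_natCast]
        field_simp
end

section
/- For all positive integers n and m, α^n ≠ √5·c_α·α_T^m, where α = (1+√5)/2, α_T is the unique real root of x³ - x² - x - 1, and c_α = 1/(-α_T² + 4α_T - 1). (Equivalently, the quantity (√5·c_α)^{-1}·α^n·α_T^{-m} - 1 never vanishes.) -/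
/-!
Modulo `3` the cubic `X³ - X² - X - 1` has no root, so it is irreducible over `ℚ` and `ℚ(α_T)` has
degree `3`, whereas a square root of a rational number lying in an extension of odd degree is itself
rational: hence `√5 ∉ ℚ(α_T)`. On the other hand `α ^ n = a + b √5` with `a`, `b` rational and
`a > 0`, so `α ^ n = √5 x` with `x ∈ ℚ(α_T)` would give `√5 = a / (x - b) ∈ ℚ(α_T)`.
-/

open Polynomial IntermediateField Module
open scoped goldenRatio

theorem mem_range_algebraMap_of_sq_mem_of_odd_finrank {F L : Type*} [Field F] [Field L]
    [Algebra F L] (hodd : Odd (finrank F L)) {x : L} (hx : x ^ 2 ∈ (algebraMap F L).range) :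
    x ∈ (algebraMap F L).range := by
  obtain ⟨a, ha⟩ := hx
  have : FiniteDimensional F L := .of_finrank_pos hodd.pos
  have hint : IsIntegral F x := .of_finite F x
  have hroot : aeval x (X ^ 2 - C a) = 0 := by simp [ha]
  have hle : (minpoly F x).natDegree ≤ 2 := by
    simpa using natDegree_le_of_dvd (minpoly.dvd F x hroot) (X_pow_sub_C_ne_zero two_pos a)
  have hdeg_odd : Odd (minpoly F x).natDegree := hodd.of_dvd_nat (minpoly.degree_dvd hint)
  rw [← minpoly.natDegree_eq_one_iff]
  grind

theorem sqrt_natCast_notMem_of_odd_finrank {K : IntermediateField ℚ ℝ} (hK : Odd (finrank ℚ K))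
    {d : ℕ} (hd : ¬IsSquare d) : √(d : ℝ) ∉ K := by
  intro hmem
  have hsq : (⟨√d, hmem⟩ : K) ^ 2 = algebraMap ℚ K d := Subtype.ext <| by simp
  obtain ⟨q, hq⟩ := mem_range_algebraMap_of_sq_mem_of_odd_finrank hK ⟨d, hsq.symm⟩
  exact irrational_sqrt_natCast_iff.2 hd ⟨q, congrArg Subtype.val hq⟩

theorem irreducible_tribonacci_zmod_three : Irreducible (X ^ 3 - X ^ 2 - X - 1 : (ZMod 3)[X]) := by
  have hdeg : (X ^ 3 - X ^ 2 - X - 1 : (ZMod 3)[X]).natDegree = 3 := by compute_degree!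
  refine irreducible_of_degree_le_three_of_not_isRoot (by simp [hdeg]) fun x ↦ ?_
  simp only [IsRoot.def, eval_sub, eval_pow, eval_X, eval_one]
  decide +revert

theorem irreducible_tribonacci_rat : Irreducible (X ^ 3 - X ^ 2 - X - 1 : ℚ[X]) := by
  have hmonic : (X ^ 3 - X ^ 2 - X - 1 : ℤ[X]).Monic := by monicity!
  have hirr : Irreducible (X ^ 3 - X ^ 2 - X - 1 : ℤ[X]) :=
    hmonic.irreducible_of_irreducible_map (Int.castRingHom (ZMod 3)) _ <| by
      simpa using irreducible_tribonacci_zmod_three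
  simpa using (hmonic.irreducible_iff_irreducible_map_fraction_map (K := ℚ)).1 hirr

theorem finrank_adjoin_tribonacci_root {L : Type*} [Field L] [Algebra ℚ L] {t : L}
    (ht : t ^ 3 - t ^ 2 - t - 1 = 0) : finrank ℚ ℚ⟮t⟯ = 3 := by
  have hmonic : (X ^ 3 - X ^ 2 - X - 1 : ℚ[X]).Monic := by monicity!
  have hroot : aeval t (X ^ 3 - X ^ 2 - X - 1 : ℚ[X]) = 0 := by simpa using ht
  rw [adjoin.finrank ⟨_, hmonic, hroot⟩,
    ← minpoly.eq_of_irreducible_of_monic irreducible_tribonacci_rat hroot hmonic]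
  compute_degree!

theorem exists_rat_goldenRatio_pow_eq_add_mul_sqrt_five (n : ℕ) :
    ∃ a b : ℚ, 0 < a ∧ φ ^ n = a + b * √5 := by
  refine ⟨Nat.fib (n + 1) - Nat.fib n / 2, Nat.fib n / 2, ?_, ?_⟩
  · have hle : (Nat.fib n : ℚ) ≤ Nat.fib (n + 1) := mod_cast Nat.fib_le_fib_succ
    have hpos : (0 : ℚ) < Nat.fib (n + 1) := mod_cast Nat.fib_pos.2 n.succ_pos
    linarith
  · rw [← Real.fib_succ_sub_goldenConj_mul_fib, Real.goldenConj]
    push_cast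
    ring

theorem phi_zero_ne_zero_general {K : IntermediateField ℚ ℝ} (hK : Odd (finrank ℚ K))
    {x : ℝ} (hx : x ∈ K) (n : ℕ) : φ ^ n ≠ √5 * x := by
  intro h
  obtain ⟨a, b, ha, hab⟩ := exists_rat_goldenRatio_pow_eq_add_mul_sqrt_five n
  have hmul : √5 * (x - b) = a := by linear_combination hab - h
  have ha_ne : (a : ℝ) ≠ 0 := mod_cast ha.ne'
  have hxb : x - b ≠ 0 := right_ne_zero_of_mul (hmul.trans_ne ha_ne)
  have hsqrt : √5 = a / (x - b) := eq_div_of_mul_eq hxb hmul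
  have hmem : √5 ∈ K :=
    hsqrt ▸ div_mem (SubfieldClass.ratCast_mem K a) (sub_mem hx (SubfieldClass.ratCast_mem K b))
  exact sqrt_natCast_notMem_of_odd_finrank hK Nat.prime_five.prime.not_isSquare (mod_cast hmem)

/-- For all positive integers `n`, `m`, we have `α^n ≠ √5·c_α·α_T^m`, i.e. the
quantity `(√5·c_α)⁻¹·α^n·α_T^(-m) - 1` never vanishes. -/
theorem phi_zero_ne_zero (α αT cα : ℝ)
    (hα : α = (1 + Real.sqrt 5) / 2)
    (hroot : αT ^ 3 - αT ^ 2 - αT - 1 = 0)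
    (huniq : ∀ x : ℝ, x ^ 3 - x ^ 2 - x - 1 = 0 → x = αT)
    (hcα : cα = 1 / (-αT ^ 2 + 4 * αT - 1))
    (n m : ℕ) (hn : 1 ≤ n) (hm : 1 ≤ m) :
    α ^ n ≠ Real.sqrt 5 * cα * αT ^ m := by
  have hodd : Odd (finrank ℚ ℚ⟮αT⟯) := finrank_adjoin_tribonacci_root hroot ▸ by decide
  have hαT : αT ∈ ℚ⟮αT⟯ := mem_adjoin_simple_self ℚ αT
  have hcα_mem : cα ∈ ℚ⟮αT⟯ := hcα ▸ div_mem (one_mem _) (sub_mem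
    (add_mem (neg_mem (pow_mem hαT 2)) (mul_mem (ofNat_mem _ 4) hαT)) (one_mem _))
  rw [hα, mul_assoc]
  exact phi_zero_ne_zero_general hodd (mul_mem hcα_mem (pow_mem hαT m)) n
end

section
/- Let n and n₁ be integers with n > n₁ ≥ 2 and n ≥ 300, and let m ≥ 2 be an integer. Then α^n - α^{n₁} ≠ √5·c_α·α_T^m, where α = (1+√5)/2, α_T is the unique real root of x³ - x² - x - 1, and c_α = 1/(-α_T² + 4α_T - 1). -/
/-!
A root `T` of `x³ - x² - x - 1` has degree `3` over `ℚ`, which is coprime to `[ℚ(√5) : ℚ] = 2`, so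
`1, T, T²` stay linearly independent over `ℚ(√5)`. Suppose `u = T ^ m / (-T² + 4T - 1)` were in
`ℚ(√5)`. Reducing `T ^ m` to `x T² + y T + z` with natural numbers `x, y, z` and comparing
coefficients with `u (-T² + 4T - 1)` gives `x = -u` and `y = 4u`, so `4x + y = 0`. Hence `x = 0`,
then `u = 0` and `T ^ m = 0`, which is absurd.
-/

open Module Polynomial
open scoped IntermediateField

theorem linearIndependent_pow_of_coprime_finrank {F E : Type*} [Field F] [Field E] [Algebra F E]
    {A : IntermediateField F E} {x : E} (hx : IsIntegral F x)
    (hA : (finrank F A).Coprime (minpoly F x).natDegree) :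
    LinearIndependent A fun i : Fin (minpoly F x).natDegree ↦ x ^ (i : ℕ) := by
  rw [← IntermediateField.adjoin.finrank hx] at hA
  have hdisjoint : A.LinearDisjoint F⟮x⟯ := .of_finrank_coprime hA
  let pb := IntermediateField.adjoin.powerBasis hx
  have hindep : LinearIndependent A fun i : Fin (minpoly F x).natDegree ↦
      algebraMap F⟮x⟯ E (pb.basis i) :=
    hdisjoint.linearIndependent_right' pb.basis.linearIndependent
  simpa [pb] using hindep

/-- The characteristic polynomial `X³ - X² - X - 1` of the Tribonacci recurrence. -/
noncomputable def tribonacciPoly : ℚ[X] := X ^ 3 - X ^ 2 - X - 1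

theorem monic_tribonacciPoly : tribonacciPoly.Monic := by
  unfold tribonacciPoly
  monicity!

theorem natDegree_tribonacciPoly : tribonacciPoly.natDegree = 3 := by
  unfold tribonacciPoly
  compute_degree!

theorem irreducible_tribonacciPoly : Irreducible tribonacciPoly := by
  refine irreducible_of_degree_le_three_of_not_isRoot (by simp [natDegree_tribonacciPoly])
    fun r hr ↦ ?_
  have hroot : r ^ 3 - r ^ 2 - r - 1 = 0 := by simpa [tribonacciPoly] using hr
  have hint : IsIntegral ℤ r := ⟨X ^ 3 - X ^ 2 - X - 1, by monicity!, by simpa using hroot⟩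
  obtain ⟨N, rfl⟩ := IsIntegrallyClosed.isIntegral_iff.mp hint
  have hN : N ^ 3 - N ^ 2 - N - 1 = 0 := by
    simp only [algebraMap_int_eq, eq_intCast] at hroot
    exact_mod_cast hroot
  have hmod : ∀ k : ZMod 3, k ^ 3 - k ^ 2 - k - 1 ≠ 0 := by decide
  exact hmod N (by exact_mod_cast congrArg (Int.cast : ℤ → ZMod 3) hN)

theorem minpoly_tribonacciRoot {E : Type*} [Field E] [CharZero E] {T : E}
    (hT : T ^ 3 - T ^ 2 - T - 1 = 0) : minpoly ℚ T = tribonacciPoly :=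
  (minpoly.eq_of_irreducible_of_monic irreducible_tribonacciPoly
    (by simpa [tribonacciPoly] using hT) monic_tribonacciPoly).symm

theorem tribonacciRoot_pow_eq_nat_quadratic {R : Type*} [CommRing R] {T : R}
    (hT : T ^ 3 - T ^ 2 - T - 1 = 0) (m : ℕ) :
    ∃ x y z : ℕ, T ^ m = x * T ^ 2 + y * T + z := by
  induction m with
  | zero => exact ⟨0, 0, 1, by simp⟩
  | succ m ih =>
    obtain ⟨x, y, z, h⟩ := ih
    refine ⟨x + y, x + z, x, ?_⟩
    rw [pow_succ, h]
    push_cast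
    linear_combination (x : R) * hT

section CharZero

variable {E : Type*} [Field E] [CharZero E] {A : IntermediateField ℚ E} {T : E}

theorem tribonacciRoot_quadratic_coeffs_eq_zero (hA : (finrank ℚ A).Coprime 3)
    (hT : T ^ 3 - T ^ 2 - T - 1 = 0) {a b c : E} (ha : a ∈ A) (hb : b ∈ A) (hc : c ∈ A)
    (h : a * T ^ 2 + b * T + c = 0) : a = 0 ∧ b = 0 ∧ c = 0 := by
  have hmin := minpoly_tribonacciRoot hT
  have hint : IsIntegral ℚ T := minpoly.ne_zero_iff.mp (hmin ▸ monic_tribonacciPoly.ne_zero)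
  have hdeg : (minpoly ℚ T).natDegree = 3 := hmin ▸ natDegree_tribonacciPoly
  have hindep := linearIndependent_pow_of_coprime_finrank hint (hdeg ▸ hA)
  rw [hdeg, Fintype.linearIndependent_iff] at hindep
  have hcoeff := hindep ![⟨c, hc⟩, ⟨b, hb⟩, ⟨a, ha⟩] (by
    simpa [Fin.sum_univ_three, Algebra.smul_def, add_assoc, add_comm, add_left_comm] using h)
  exact ⟨congrArg Subtype.val (hcoeff 2), congrArg Subtype.val (hcoeff 1),
    congrArg Subtype.val (hcoeff 0)⟩

theorem tribonacciRoot_binet_denom_ne_zero (hT : T ^ 3 - T ^ 2 - T - 1 = 0) :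
    -T ^ 2 + 4 * T - 1 ≠ 0 := by
  intro h
  have hbot : (finrank ℚ (⊥ : IntermediateField ℚ E)).Coprime 3 := by simp
  have hcoeff := tribonacciRoot_quadratic_coeffs_eq_zero hbot hT (neg_mem (one_mem _))
    (ofNat_mem _ 4) (neg_mem (one_mem _)) (by linear_combination h)
  exact neg_ne_zero.mpr one_ne_zero hcoeff.1

theorem tribonacciRoot_binet_term_notMem (hA : (finrank ℚ A).Coprime 3)
    (hT : T ^ 3 - T ^ 2 - T - 1 = 0) (m : ℕ) :
    1 / (-T ^ 2 + 4 * T - 1) * T ^ m ∉ A := by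
  intro hu
  set u := 1 / (-T ^ 2 + 4 * T - 1) * T ^ m with hudef
  have hpow : T ^ m = u * (-T ^ 2 + 4 * T - 1) := by
    rw [hudef, one_div_mul_eq_div, div_mul_cancel₀ _ (tribonacciRoot_binet_denom_ne_zero hT)]
  obtain ⟨x, y, z, hxyz⟩ := tribonacciRoot_pow_eq_nat_quadratic hT m
  obtain ⟨hx, hy, -⟩ : (x : E) + u = 0 ∧ (y : E) - 4 * u = 0 ∧ (z : E) + u = 0 :=
    tribonacciRoot_quadratic_coeffs_eq_zero hA hT (add_mem (natCast_mem A x) hu)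
      (sub_mem (natCast_mem A y) (mul_mem (ofNat_mem A 4) hu)) (add_mem (natCast_mem A z) hu)
      (by linear_combination hpow - hxyz)
  have hxy : ((4 * x + y : ℕ) : E) = 0 := by
    push_cast
    linear_combination 4 * hx + hy
  have hx0 : x = 0 := by
    have := Nat.cast_eq_zero.mp hxy
    lia
  have hu0 : u = 0 := by simpa [hx0] using hx
  have hT0 : T ≠ 0 := by
    rintro rfl
    simp at hT
  exact pow_ne_zero m hT0 (by rw [hpow, hu0, zero_mul])

end CharZero

theorem finrank_adjoin_sqrt_five : finrank ℚ ℚ⟮√5⟯ = 2 := by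
  have hirr : Irreducible (X ^ 2 - C 5 : ℚ[X]) :=
    X_pow_sub_C_irreducible_of_prime Nat.prime_two fun q hq ↦
      (by norm_num : ¬IsSquare (5 : ℚ)) ⟨q, by rw [← hq, sq]⟩
  have hmin : minpoly ℚ √5 = X ^ 2 - C 5 :=
    (minpoly.eq_of_irreducible_of_monic hirr (by simp) (monic_X_pow_sub_C 5 two_ne_zero)).symm
  have hint : IsIntegral ℚ √5 := minpoly.ne_zero_iff.mp (hmin ▸ hirr.ne_zero)
  rw [IntermediateField.adjoin.finrank hint, hmin, natDegree_X_pow_sub_C]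

theorem phi_one_ne_zero_general {β αT cα : ℝ} (hβ : β ∈ ℚ⟮√5⟯)
    (hroot : αT ^ 3 - αT ^ 2 - αT - 1 = 0) (hcα : cα = 1 / (-αT ^ 2 + 4 * αT - 1)) (m : ℕ) :
    β ≠ √5 * cα * αT ^ m := by
  rintro rfl
  have hcoprime : (finrank ℚ ℚ⟮√5⟯).Coprime 3 := by
    rw [finrank_adjoin_sqrt_five]
    decide
  refine tribonacciRoot_binet_term_notMem hcoprime hroot m ?_
  have hquot := div_mem hβ (IntermediateField.mem_adjoin_simple_self ℚ √5)
  rwa [mul_assoc, mul_div_cancel_left₀ _ (by positivity), hcα] at hquot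

theorem goldenRatio_mem_adjoin_sqrt_five : Real.goldenRatio ∈ ℚ⟮√5⟯ :=
  div_mem (add_mem (one_mem _) (IntermediateField.mem_adjoin_simple_self ℚ √5)) (ofNat_mem _ 2)

/-- If `n > n₁ ≥ 2`, `n ≥ 300` and `m ≥ 2`, then
`α^n - α^(n₁) ≠ √5·c_α·α_T^m`. -/
theorem phi_one_ne_zero (α αT cα : ℝ)
    (hα : α = (1 + Real.sqrt 5) / 2)
    (hroot : αT ^ 3 - αT ^ 2 - αT - 1 = 0)
    (huniq : ∀ x : ℝ, x ^ 3 - x ^ 2 - x - 1 = 0 → x = αT)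
    (hcα : cα = 1 / (-αT ^ 2 + 4 * αT - 1))
    (n n₁ m : ℕ) (hn₁ : 2 ≤ n₁) (hn : n₁ < n) (hn300 : 300 ≤ n) (hm : 2 ≤ m) :
    α ^ n - α ^ n₁ ≠ Real.sqrt 5 * cα * αT ^ m := by
  have hmem : α ∈ ℚ⟮√5⟯ := hα ▸ goldenRatio_mem_adjoin_sqrt_five
  exact phi_one_ne_zero_general (sub_mem (pow_mem hmem n) (pow_mem hmem n₁)) hroot hcα m
end
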